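/- Let n, m be natural numbers and let Φ be a ℂ-algebra homomorphism from the ring of entire functions on Fin n → ℂ to the ring of entire functions on Fin m → ℂ (no continuity assumed). Then there exists a unique entire map g : (Fin m → ℂ) → (Fin n → ℂ) such that Φ(f) = f ∘ g for every entire f : (Fin n → ℂ) → ℂ; moreover the i-th component of g is Φ applied to the i-th coordinate function. Consequently, g ↦ (f ↦ f ∘ g) is a bijection between entire maps ℂᵐ → ℂⁿ and ℂ-algebra homomorphisms from the ring of entire functions on ℂⁿ to the ring of entire functions on ℂᵐ. -/

import Mathlib

/-!
Everything reduces to showing that an arbitrary character `χ` of the ring of entire functions on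
`ℂⁿ` is evaluation at the point `a = (χ(z₁), …, χ(zₙ))`. By Hadamard's lemma
(`exists_hadamard`) every entire `f` can be written `f = f(a) + ∑ᵢ (zᵢ - aᵢ) hᵢ` with all `hᵢ`
entire, and applying `χ` kills every term of the sum, whence `χ(f) = f(a)`. No continuity of `χ`
is involved. Applied to the characters `f ↦ Φ(f)(w)`, this gives `Φ(f) = f ∘ g` with
`gᵢ = Φ(zᵢ)`.

Hadamard's lemma comes from `hᵢ(z) = ∫₀¹ ∂ᵢf(a + t(z - a)) dt`. That `∂ᵢf` and `hᵢ` are entire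
in several variables both follow from `differentiable_intervalIntegral`: an integral over a compact
interval of entire functions depending continuously on a parameter is entire. For `∂ᵢf` one uses
Cauchy's formula, which expresses it as such an integral.
-/

/-- The ring of entire functions on a complex normed space `E`. -/
def entireAlg (E : Type) [NormedAddCommGroup E] [NormedSpace ℂ E] :
    Subalgebra ℂ (E → ℂ) where
  carrier := {f | Differentiable ℂ f}
  mul_mem' hf hg := hf.mul hg
  one_mem' := differentiable_const 1
  add_mem' hf hg := hf.add hg
  zero_mem' := differentiable_const 0
  algebraMap_mem' c := differentiable_const c

/-- The `i`-th coordinate function on `ℂⁿ`, as an entire function. -/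
def coordFn (n : ℕ) (i : Fin n) : entireAlg (Fin n → ℂ) :=
  ⟨fun z => z i, (ContinuousLinearMap.proj (R := ℂ) (φ := fun _ : Fin n => ℂ) i).differentiable⟩

/-- Pullback `f ↦ f ∘ g` along an entire map `g : ℂᵐ → ℂⁿ`, as a `ℂ`-algebra
homomorphism between the rings of entire functions. -/
def pullback {n m : ℕ} (g : (Fin m → ℂ) → (Fin n → ℂ)) (hg : Differentiable ℂ g) :
    entireAlg (Fin n → ℂ) →ₐ[ℂ] entireAlg (Fin m → ℂ) where
  toFun f := ⟨f.1 ∘ g, f.2.comp hg⟩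
  map_one' := rfl
  map_mul' _ _ := rfl
  map_zero' := rfl
  map_add' _ _ := rfl
  commutes' _ := rfl

/-- Integrals of entire functions depending continuously on a parameter are entire. The uniform
bound on the derivatives needed to differentiate under the integral sign comes from the Schwarz
lemma on unit balls and the local boundedness of `G`. -/
lemma differentiable_intervalIntegral {E : Type} [NormedAddCommGroup E] [NormedSpace ℂ E]
    [FiniteDimensional ℂ E] (G : ℝ → E → ℂ) (hc : Continuous (Function.uncurry G))
    (hd : ∀ t, Differentiable ℂ (G t)) (a b : ℝ) :
    Differentiable ℂ (fun z => ∫ t in a..b, G t z) := by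
  intro z₀
  have : ProperSpace E := FiniteDimensional.proper ℂ E
  -- Properness makes the dual second countable, so measurable maps into it are strongly measurable.
  have : ProperSpace (E →L[ℂ] ℂ) := FiniteDimensional.proper ℂ _
  obtain ⟨M, hM⟩ := ((isCompact_uIcc (a := a) (b := b)).prod
    (isCompact_closedBall z₀ 2)).exists_bound_of_continuousOn hc.continuousOn
  have hct : ∀ z, Continuous fun t => G t z := fun z => hc.comp (by fun_prop : Continuous
    fun t : ℝ => (t, z))
  refine (intervalIntegral.hasFDerivAt_integral_of_dominated_of_fderiv_le
    (F := fun z t => G t z) (F' := fun z t => fderiv ℂ (G t) z) (bound := fun _ => 2 * M + 1)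
    (Metric.ball_mem_nhds z₀ one_pos) ?_ ?_ ?_ ?_ ?_ ?_).differentiableAt
  · exact .of_forall fun z => (hct z).aestronglyMeasurable
  · exact (hct z₀).intervalIntegrable _ _
  · borelize E
    exact ((measurable_fderiv_with_param ℂ hc).comp
      (by fun_prop : Measurable fun t : ℝ => (t, z₀))).aestronglyMeasurable
  · refine .of_forall fun t ht z hz => ?_
    have hbd : ∀ y ∈ Metric.ball z 1, ‖G t y‖ ≤ M := fun y hy =>
      hM (t, y) ⟨Set.uIoc_subset_uIcc ht, by
        rw [Metric.mem_ball] at hy hz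
        rw [Metric.mem_closedBall]
        linarith [dist_triangle y z z₀]⟩
    have := Complex.norm_fderiv_le_div_of_mapsTo_ball (f := G t) (c := z) (R₁ := 1)
      (R₂ := 2 * M + 1) (hd t).differentiableOn (fun y hy => by
        rw [Metric.mem_closedBall, dist_eq_norm]
        linarith [norm_sub_le (G t y) (G t z), hbd y hy,
          hbd z (Metric.mem_ball_self one_pos)]) one_pos
    simpa using this
  · exact intervalIntegrable_const
  · exact .of_forall fun t _ z _ => (hd t z).hasFDerivAt

/-- Directional derivatives of an entire function are entire, since Cauchy's formula on the complex
line `w ↦ z + w v` writes them as integrals of translates of `f`. -/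
lemma differentiable_fderiv_apply {E : Type} [NormedAddCommGroup E] [NormedSpace ℂ E]
    [FiniteDimensional ℂ E] {f : E → ℂ} (hf : Differentiable ℂ f) (v : E) :
    Differentiable ℂ (fun z => fderiv ℂ f z v) := by
  have key : ∀ z, fderiv ℂ f z v = (2 * Real.pi * Complex.I)⁻¹ *
      ∫ θ in (0 : ℝ)..2 * Real.pi, circleMap 0 1 θ * Complex.I *
        ((circleMap 0 1 θ)⁻¹ ^ 2 * f (z + circleMap 0 1 θ • v)) := by
    intro z
    have hl : HasDerivAt (fun w : ℂ => z + w • v) v 0 := by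
      simpa using ((hasDerivAt_id (0 : ℂ)).smul_const v).const_add z
    have hfl : HasDerivAt (fun w : ℂ => f (z + w • v)) (fderiv ℂ f z v) 0 :=
      HasFDerivAt.comp_hasDerivAt (f := fun w : ℂ => z + w • v) (0 : ℂ)
        (by simpa using (hf z).hasFDerivAt) hl
    have hdl : Differentiable ℂ (fun w : ℂ => f (z + w • v)) := by fun_prop
    have hC := DifferentiableOn.deriv_eq_smul_circleIntegral (c := 0) one_pos
      hdl.differentiableOn
    rw [hfl.deriv, smul_eq_mul] at hC
    rw [eq_inv_mul_iff_mul_eq₀ Complex.two_pi_I_ne_zero, ← hC]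
    simp [circleIntegral, deriv_circleMap]
  simp_rw [key]
  refine (differentiable_intervalIntegral _ ?_ ?_ _ _).const_mul _
  · have h0 : ∀ θ : ℝ, circleMap 0 1 θ ≠ 0 := fun θ => circleMap_ne_center one_ne_zero
    have := hf.continuous
    have hm := continuous_circleMap 0 1
    have hi := hm.inv₀ h0
    have hi' := hi.comp (continuous_fst (X := ℝ) (Y := E))
    simp only [Function.uncurry_def]
    exact (by fun_prop : Continuous fun p : ℝ × E => circleMap 0 1 p.1 * Complex.I).mul
      ((hi'.pow 2).mul (by fun_prop))
  · intro θ
    fun_prop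

/-- **Hadamard's lemma** for entire functions on `ℂⁿ`. -/
lemma exists_hadamard {n : ℕ} {f : (Fin n → ℂ) → ℂ} (hf : Differentiable ℂ f) (a : Fin n → ℂ) :
    ∃ h : Fin n → (Fin n → ℂ) → ℂ, (∀ i, Differentiable ℂ (h i)) ∧
      ∀ z, f z = f a + ∑ i, (z i - a i) * h i z := by
  have hp := fun i : Fin n => differentiable_fderiv_apply hf (Pi.single i 1)
  have hpc := fun i => (hp i).continuous
  refine ⟨fun i z => ∫ t in (0 : ℝ)..1, fderiv ℂ f (a + (t : ℂ) • (z - a)) (Pi.single i 1),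
    fun i => ?_, fun z => ?_⟩
  · refine differentiable_intervalIntegral _ ?_ ?_ _ _
    · exact (hpc i).comp (by fun_prop :
        Continuous fun p : ℝ × (Fin n → ℂ) => a + (p.1 : ℂ) • (p.2 - a))
    · exact fun t => (hp i).comp (by fun_prop :
        Differentiable ℂ fun z : Fin n → ℂ => a + (t : ℂ) • (z - a))
  · have hsum : ∀ x v, fderiv ℂ f x v = ∑ i, v i * fderiv ℂ f x (Pi.single i 1) := fun x v => by
      conv_lhs => rw [pi_eq_sum_univ' v]
      simp [map_sum]
    have hct : ∀ i, Continuous fun t : ℝ =>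
        fderiv ℂ f (a + (t : ℂ) • (z - a)) (Pi.single i 1) := fun i =>
      (hpc i).comp (by fun_prop : Continuous fun t : ℝ => a + (t : ℂ) • (z - a))
    have hder : ∀ t : ℝ, HasDerivAt (fun t : ℝ => f (a + (t : ℂ) • (z - a)))
        (∑ i, (z i - a i) * fderiv ℂ f (a + (t : ℂ) • (z - a)) (Pi.single i 1)) t := by
      intro t
      have hl : HasDerivAt (fun t : ℝ => a + (t : ℂ) • (z - a)) (z - a) t := by
        simpa using ((Complex.ofRealCLM.hasDerivAt (x := t)).smul_const (z - a)).const_add a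
      have := ((hf (a + (t : ℂ) • (z - a))).hasFDerivAt.restrictScalars ℝ).comp_hasDerivAt t hl
      rw [ContinuousLinearMap.coe_restrictScalars', hsum] at this
      exact this
    have hint := intervalIntegral.integral_eq_sub_of_hasDerivAt (a := 0) (b := 1)
      (fun t _ => hder t) (Continuous.intervalIntegrable (by fun_prop) _ _)
    rw [intervalIntegral.integral_finsetSum fun i _ =>
      Continuous.intervalIntegrable (by fun_prop) _ _] at hint
    simp only [intervalIntegral.integral_const_mul] at hint
    rw [hint]
    simp

/-- Characters of the ring of entire functions on `ℂⁿ` are point evaluations. -/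
lemma character_eq_eval {n : ℕ} (χ : entireAlg (Fin n → ℂ) →ₐ[ℂ] ℂ)
    (f : entireAlg (Fin n → ℂ)) : χ f = f.1 (fun i => χ (coordFn n i)) := by
  set a : Fin n → ℂ := fun i => χ (coordFn n i) with ha
  obtain ⟨h, hh, hfh⟩ := exists_hadamard f.2 a
  have hf : f = algebraMap ℂ _ (f.1 a) +
      ∑ i, (coordFn n i - algebraMap ℂ _ (a i)) * (⟨h i, hh i⟩ : entireAlg (Fin n → ℂ)) := by
    apply Subtype.ext
    funext z
    simpa [coordFn] using hfh z
  conv_lhs => rw [hf]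
  simp [ha]

/-- Evaluation at `w`, as a character of the ring of entire functions. -/
noncomputable def evalChar {m : ℕ} (w : Fin m → ℂ) : entireAlg (Fin m → ℂ) →ₐ[ℂ] ℂ :=
  (Pi.evalAlgHom ℂ (fun _ : Fin m → ℂ => ℂ) w).comp (entireAlg (Fin m → ℂ)).val


/-- Every abstract `ℂ`-algebra homomorphism
`Φ : O(ℂⁿ) → O(ℂᵐ)` is pullback along a unique entire map `g : ℂᵐ → ℂⁿ`, whose
`i`-th component is `Φ` of the `i`-th coordinate function; consequently
`g ↦ (f ↦ f ∘ g)` is a bijection between entire maps `ℂᵐ → ℂⁿ` and `ℂ`-algebra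
homomorphisms `O(ℂⁿ) → O(ℂᵐ)`. -/
theorem algHom_of_entire_functions_is_pullback (n m : ℕ) :
    (∀ Φ : entireAlg (Fin n → ℂ) →ₐ[ℂ] entireAlg (Fin m → ℂ),
      ∃! g : {g : (Fin m → ℂ) → (Fin n → ℂ) // Differentiable ℂ g},
        (∀ f : entireAlg (Fin n → ℂ),
          (Φ f : (Fin m → ℂ) → ℂ) = (f : (Fin n → ℂ) → ℂ) ∘ g.1) ∧
        (∀ i : Fin n, (fun w => g.1 w i) = (Φ (coordFn n i) : (Fin m → ℂ) → ℂ))) ∧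
    Function.Bijective
      (fun g : {g : (Fin m → ℂ) → (Fin n → ℂ) // Differentiable ℂ g} =>
        pullback g.1 g.2) := by
  have ex : ∀ Φ : entireAlg (Fin n → ℂ) →ₐ[ℂ] entireAlg (Fin m → ℂ),
      ∃ g : {g : (Fin m → ℂ) → (Fin n → ℂ) // Differentiable ℂ g},
        (∀ f : entireAlg (Fin n → ℂ),
          (Φ f : (Fin m → ℂ) → ℂ) = (f : (Fin n → ℂ) → ℂ) ∘ g.1) ∧
        (∀ i : Fin n, (fun w => g.1 w i) = (Φ (coordFn n i) : (Fin m → ℂ) → ℂ)) := fun Φ =>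
    ⟨⟨fun w i => (Φ (coordFn n i)).1 w, differentiable_pi.2 fun i => (Φ (coordFn n i)).2⟩,
      fun f => funext fun w => character_eq_eval ((evalChar w).comp Φ) f, fun _ => rfl⟩
  refine ⟨fun Φ => ?_, fun g g' hgg => ?_, fun Φ => ?_⟩
  · obtain ⟨g, hg, hgi⟩ := ex Φ
    refine ⟨g, ⟨hg, hgi⟩, fun g' hg' => Subtype.ext (funext fun w => funext fun i => ?_)⟩
    exact congrFun ((hg'.2 i).trans (hgi i).symm) w
  · refine Subtype.ext (funext fun w => funext fun i => ?_)
    exact congrFun (congrArg Subtype.val (DFunLike.congr_fun hgg (coordFn n i))) w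
  · obtain ⟨g, hg, -⟩ := ex Φ
    exact ⟨g, AlgHom.ext fun f => Subtype.ext (hg f).symm⟩
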